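/- Let (W,S) be a Coxeter system satisfying: (0) for all s,t ∈ S with m(s,t) even, m(s,t) = 2; (1) for all s ≠ t ∈ S with m(s,t) odd, {s,t} is a maximal spherical subset of S; (2) there is no three-element subset {s,t,u} ⊆ S such that m(s,t) and m(t,u) are both odd; (3) for all s ≠ t ∈ S with m(s,t) odd, the number of maximal spherical subsets of S intersecting {s,t} is at most two. Let (W',S') be a Coxeter system, let φ : W → W' be a group isomorphism, let T_1, …, T_k be maximal spherical subsets of S and T'_1, …, T'_k be maximal spherical subsets of S' such that for each i, φ(W_{T_i}) is conjugate in W' to W'_{T'_i} and W_{T_i} ≅ (ℤ/2ℤ)^{|T_i|}. Then |T_1 ∩ ⋯ ∩ T_k| = |T'_1 ∩ ⋯ ∩ T'_k|. -/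

import Mathlib

/-!
The proof compares the two systems through the abelianizations of `W` and `W'`.  The abelianization
of a Coxeter group is an elementary abelian 2-group with basis the distinct classes of the
generators, two generators having the same class exactly when they are joined by a path of odd
edges; the image of `W_T` is the coordinate subspace on the classes of `T` (`mem_map_parabolic`).
Since `φ(W_{T_i})` is conjugate to `W'_{T'_i}` and conjugation is invisible in the abelianization,
`φ` matches these coordinate subspaces and all their intersections, so the sets of classes
`⋂ [T_i]` and `⋂ [T'_i]` have equal size (`ncard_iInter_image_ab`).  It remains to see that in each
system a class is represented by at most one generator in `T_1 ∪ ⋯ ∪ T_k`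
(respectively `T'_1 ∪ ⋯ ∪ T'_k`).

For `S`: by (2), distinct generators with equal classes form an odd edge `{p, r}`, which by (1) is
maximal spherical.  It is not one of the `T_i`, as its dihedral group is not elementary abelian, so
by (3) at most one of the sets `T_i` meets `{p, r}`, and that one cannot contain both ends.

For `S'`: a commutative finite `W'_T` has order at least `2 ^ |T|` (`two_pow_le_card`), and counting
shows that the generators in a single `T'_i` have distinct classes.  If `s ∈ T'_a` and `t ∈ T'_b`
are distinct with equal classes, then `s` lies on an odd edge, so `s` is contained in a finite
noncommutative dihedral subgroup.  Its preimage in `W` is conjugate into a finite `W_U`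
(`exists_spherical_of_finite`), and (0) and (1) force `U` to be an odd edge `{p, r}`, whose class
corresponds to that of `s`.  Hence `T_a` and `T_b` both meet `{p, r}`, so `T_a = T_b`; then
`W'_{T'_a}` and `W'_{T'_b}` are conjugate and `T'_a = T'_b` (`eq_of_conj`), a contradiction.

The facts about finite subgroups come from the geometric representation on `B →₀ ℝ`: every root is
positive or negative, and a linear functional that is nonpositive on only finitely many positive
roots lies in the orbit of one that is nonnegative on the simple roots, with a finite standard
parabolic subgroup as stabilizer.
-/

/-- The standard parabolic subgroup `W_T` of a Coxeter system, generated by the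
simple reflections indexed by `T`. -/
def CoxeterSystem.parabolic {B W : Type*} [Group W] {M : CoxeterMatrix B}
    (cs : CoxeterSystem M W) (T : Set B) : Subgroup W :=
  Subgroup.closure (cs.simple '' T)

/-- `T` is a spherical subset: the parabolic subgroup `W_T` is finite. -/
def CoxeterSystem.IsSpherical {B W : Type*} [Group W] {M : CoxeterMatrix B}
    (cs : CoxeterSystem M W) (T : Set B) : Prop :=
  Finite (cs.parabolic T)

/-- `T` is a maximal spherical subset: spherical and maximal under inclusion
among spherical subsets. -/
def CoxeterSystem.IsMaxSpherical {B W : Type*} [Group W] {M : CoxeterMatrix B}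
    (cs : CoxeterSystem M W) (T : Set B) : Prop :=
  cs.IsSpherical T ∧ ∀ U : Set B, cs.IsSpherical U → T ⊆ U → U = T

/-- The conjugate subgroup `g H g⁻¹`. -/
def conjSubgroup {G : Type*} [Group G] (g : G) (H : Subgroup G) : Subgroup G :=
  Subgroup.map (MulAut.conj g).toMonoidHom H

namespace CoxGeom

open Real

variable {B W : Type*} [Group W]

/-! ### The geometric representation -/

/-- The linear functional `x ↦ B(eᵢ, x)`, where `B(eᵢ, eⱼ) = -cos (π / M i j)`.  For
`M i j = 0`, which encodes `∞`, the convention `π / 0 = 0` gives the usual value `-1`. -/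
noncomputable def bil (M : CoxeterMatrix B) (i : B) : (B →₀ ℝ) →ₗ[ℝ] ℝ :=
  Finsupp.linearCombination ℝ (fun j => -cos (π / M i j))

/-- The simple root `eᵢ`. -/
noncomputable abbrev e (i : B) : B →₀ ℝ := Finsupp.single i 1

/-- The orthogonal reflection in the simple root `eᵢ`. -/
noncomputable def refl (M : CoxeterMatrix B) (i : B) : Module.End ℝ (B →₀ ℝ) :=
  LinearMap.id - (2 : ℝ) • (bil M i).smulRight (e i)

lemma bil_e (M : CoxeterMatrix B) (i j : B) : bil M i (e j) = -cos (π / M i j) := by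
  simp [bil]

lemma bil_self (M : CoxeterMatrix B) (i : B) : bil M i (e i) = 1 := by
  simp [bil_e]

lemma bil_symm (M : CoxeterMatrix B) (i j : B) : bil M i (e j) = bil M j (e i) := by
  rw [bil_e, bil_e, M.symmetric]

lemma refl_apply (M : CoxeterMatrix B) (i : B) (x : B →₀ ℝ) :
    refl M i x = x - (2 * bil M i x) • e i := by
  simp [refl]

lemma refl_self (M : CoxeterMatrix B) (i : B) : refl M i (e i) = -e i := by
  rw [refl_apply, bil_self, mul_one, two_smul]; abel

lemma refl_refl (M : CoxeterMatrix B) (i : B) (x : B →₀ ℝ) : refl M i (refl M i x) = x := by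
  conv_lhs => rw [refl_apply, refl_apply, map_sub, map_smul, bil_self]
  simp only [smul_eq_mul, mul_one]
  rw [sub_sub, ← add_smul]
  ring_nf
  simp

/-- The numbers `sin (k θ) / sin θ`, given by their linear recurrence so that the degenerate
angle `θ = 0` (where the value is `k`) needs no special treatment. -/
noncomputable def seqA (c : ℝ) : ℕ → ℝ
  | 0 => 0
  | 1 => 1
  | k + 2 => 2 * c * seqA c (k + 1) - seqA c k

lemma seqA_sin (θ : ℝ) : ∀ k : ℕ, seqA (cos θ) k * sin θ = sin (k * θ)
  | 0 => by simp [seqA]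
  | 1 => by simp [seqA]
  | k + 2 => by
    have h1 := seqA_sin θ (k + 1)
    have h2 := seqA_sin θ k
    rw [seqA, sub_mul, mul_assoc, h1, h2]
    push_cast
    have e1 : ((k : ℝ) + 2) * θ = (k + 1) * θ + θ := by ring
    have e2 : (k : ℝ) * θ = (k + 1) * θ - θ := by ring
    rw [e1, e2, sin_add, sin_sub]
    ring

lemma seqA_one (k : ℕ) : seqA 1 k = k ∧ seqA 1 (k + 1) = k + 1 := by
  induction k with
  | zero => simp [seqA]
  | succ k ih =>
    refine ⟨by push_cast; exact ih.2, ?_⟩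
    rw [seqA, ih.1, ih.2]
    push_cast
    ring

/-- For two distinct generators whose product has finite order `m`, the angle `π / m` has
positive sine. -/
lemma sin_pos_of {m : ℕ} (h0 : m ≠ 0) (h1 : m ≠ 1) : 0 < sin (π / m) := by
  have hm : (2 : ℝ) ≤ m := by exact_mod_cast (by lia : 2 ≤ m)
  apply sin_pos_of_pos_of_lt_pi
  · positivity
  · rw [div_lt_iff₀ (by linarith)]
    nlinarith [pi_pos]

lemma seqA_nonneg {m k : ℕ} (h1 : m ≠ 1) (hk : m ≠ 0 → k ≤ m) :
    0 ≤ seqA (cos (π / m)) k := by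
  rcases eq_or_ne m 0 with rfl | h0
  · simp [(seqA_one k).1]
  · have hs := sin_pos_of h0 h1
    have hm : (0 : ℝ) < m := by positivity
    have h : 0 ≤ sin (k * (π / m)) := by
      apply sin_nonneg_of_nonneg_of_le_pi
      · positivity
      · rw [← mul_div_assoc, div_le_iff₀ hm, mul_comm]
        have : (k : ℝ) ≤ m := by exact_mod_cast hk h0
        nlinarith [pi_pos]
    rw [← seqA_sin] at h
    exact nonneg_of_mul_nonneg_left h hs

lemma refl_alt_step (M : CoxeterMatrix B) (p q : B) (a b : ℝ) :
    refl M q (a • e p + b • e q) = a • e p + (2 * cos (π / M p q) * a - b) • e q := by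
  rw [map_add, map_smul, map_smul, refl_self, refl_apply, bil_e, M.symmetric q p]
  module

/-- The action of an even alternating product `(σᵢ σⱼ)ⁿ` on `eᵢ`. -/
lemma refl_pow_apply (M : CoxeterMatrix B) (i j : B) (n : ℕ) :
    ((refl M i * refl M j) ^ n) (e i) =
      seqA (cos (π / M i j)) (2 * n + 1) • e i + seqA (cos (π / M i j)) (2 * n) • e j := by
  induction n with
  | zero => simp [seqA]
  | succ n ih =>
    rw [pow_succ', Module.End.mul_apply, ih, Module.End.mul_apply, refl_alt_step]
    have h1 : seqA (cos (π / M i j)) (2 * (n + 1)) =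
        2 * cos (π / M i j) * seqA (cos (π / M i j)) (2 * n + 1)
          - seqA (cos (π / M i j)) (2 * n) := rfl
    rw [← h1, add_comm, refl_alt_step, add_comm, M.symmetric j i]
    rfl

lemma refl_pow_fix (M : CoxeterMatrix B) {i j : B} (hij : i ≠ j) (h0 : M i j ≠ 0) :
    ((refl M i * refl M j) ^ M i j) (e i) = e i := by
  have hs := sin_pos_of h0 (M.off_diagonal i j hij)
  have hm : (M i j : ℝ) ≠ 0 := by exact_mod_cast h0
  rw [refl_pow_apply]
  have h1 : seqA (cos (π / M i j)) (2 * M i j + 1) = 1 := by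
    have := seqA_sin (π / M i j) (2 * M i j + 1)
    have h2 : ((2 * M i j + 1 : ℕ) : ℝ) * (π / M i j) = π / M i j + 2 * π := by
      push_cast; field_simp; ring
    rw [h2, sin_add_two_pi] at this
    exact mul_right_cancel₀ hs.ne' (this.trans (one_mul _).symm)
  have h2 : seqA (cos (π / M i j)) (2 * M i j) = 0 := by
    have := seqA_sin (π / M i j) (2 * M i j)
    have h2 : ((2 * M i j : ℕ) : ℝ) * (π / M i j) = 2 * π := by
      push_cast; field_simp
    rw [h2, sin_two_pi] at this
    exact (mul_eq_zero.1 this).resolve_right hs.ne'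
  rw [h1, h2]
  simp

lemma refl_mul_self (M : CoxeterMatrix B) (i : B) : refl M i * refl M i = 1 := by
  ext1 x
  ext1
  simp [Module.End.mul_apply, refl_refl]

/-- The reflections satisfy the Coxeter relations: `(σᵢ σⱼ)ᵐ` fixes the plane of `eᵢ, eⱼ` and its
orthogonal complement, and these span because the form is nondegenerate on that plane. -/
lemma refl_liftable (M : CoxeterMatrix B) : M.IsLiftable (refl M) := by
  intro i j
  rcases eq_or_ne i j with rfl | hij
  · rw [refl_mul_self, one_pow]
  rcases eq_or_ne (M i j) 0 with h0 | h0
  · rw [h0, pow_zero]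
  have hs := sin_pos_of h0 (M.off_diagonal i j hij)
  have hi := refl_pow_fix M hij h0
  have hj : ((refl M i * refl M j) ^ M i j) (e j) = e j := by
    have h := refl_pow_fix M hij.symm (M.symmetric i j ▸ h0)
    rw [M.symmetric j i] at h
    have hc : (refl M i * refl M j) * (refl M j * refl M i) = 1 := by
      rw [mul_assoc, ← mul_assoc (refl M j), refl_mul_self, one_mul, refl_mul_self]
    have hc' : (refl M j * refl M i) * (refl M i * refl M j) = 1 := by
      rw [mul_assoc, ← mul_assoc (refl M i), refl_mul_self, one_mul, refl_mul_self]
    have hcc : (refl M i * refl M j) ^ M i j * (refl M j * refl M i) ^ M i j = 1 := by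
      rw [← (show Commute _ _ from hc.trans hc'.symm).mul_pow, hc, one_pow]
    have := congrArg (fun f => f (e j)) hcc
    simpa [Module.End.mul_apply, h] using this
  have hperp : ∀ y, bil M i y = 0 → bil M j y = 0 →
      ((refl M i * refl M j) ^ M i j) y = y := by
    intro y h1 h2
    have : (refl M i * refl M j) y = y := by
      rw [Module.End.mul_apply, refl_apply M j, h2]
      simp [refl_apply, h1]
    generalize M i j = n
    induction n with
    | zero => simp
    | succ n ih => rw [pow_succ, Module.End.mul_apply, this, ih]
  apply LinearMap.ext
  intro z
  set c := cos (π / M i j) with hc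
  have hne : 1 - c ^ 2 ≠ 0 := by
    have := sin_sq_add_cos_sq (π / M i j)
    have h2 : 0 < sin (π / M i j) ^ 2 := by positivity
    rw [← hc] at this
    intro h
    linarith
  -- `x eᵢ + y eⱼ` is the orthogonal projection of `z` to the plane
  set x := (bil M i z + c * bil M j z) / (1 - c ^ 2) with hx
  set y := (bil M j z + c * bil M i z) / (1 - c ^ 2) with hy
  have key := hperp (z - x • e i - y • e j)
    (by
      rw [map_sub, map_sub, map_smul, map_smul, bil_self, bil_e, ← hc, hx, hy]
      simp only [smul_eq_mul]
      field_simp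
      ring)
    (by
      rw [map_sub, map_sub, map_smul, map_smul, bil_self, bil_e, M.symmetric j i, ← hc, hx, hy]
      simp only [smul_eq_mul]
      field_simp
      ring)
  rw [map_sub, map_sub, map_smul, map_smul, hi, hj] at key
  simpa using key

variable {M : CoxeterMatrix B} (cs : CoxeterSystem M W)

/-- The geometric representation of a Coxeter group. -/
noncomputable def rep : W →* Module.End ℝ (B →₀ ℝ) := cs.lift ⟨refl M, refl_liftable M⟩

lemma rep_simple (i : B) : rep cs (cs.simple i) = refl M i := by
  simp [rep]

lemma rep_mul_apply (v w : W) (x : B →₀ ℝ) : rep cs (v * w) x = rep cs v (rep cs w x) := by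
  rw [map_mul, Module.End.mul_apply]

lemma rep_inv_apply (w : W) (x : B →₀ ℝ) : rep cs w⁻¹ (rep cs w x) = x := by
  rw [← rep_mul_apply]; simp

lemma rep_injective (w : W) : Function.Injective (rep cs w) :=
  Function.LeftInverse.injective (rep_inv_apply cs w)

lemma rep_apply_inv (w : W) (x : B →₀ ℝ) : rep cs w (rep cs w⁻¹ x) = x := by
  rw [← rep_mul_apply]; simp

lemma e_ne_zero (i : B) : (e i : B →₀ ℝ) ≠ 0 := by simp

/-! ### Every root is positive or negative -/

/-- Even and odd alternating products applied to a simple root. -/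
lemma rep_alternating (i j : B) (k : ℕ) :
    rep cs (cs.wordProd (CoxeterSystem.alternatingWord i j k)) (e i) =
      seqA (cos (π / M i j)) (k + 1) • e (if Even k then i else j) +
        seqA (cos (π / M i j)) k • e (if Even k then j else i) := by
  induction k with
  | zero => simp [seqA, CoxeterSystem.alternatingWord]
  | succ k ih =>
    rw [CoxeterSystem.alternatingWord_succ', cs.wordProd_cons, rep_mul_apply, ih, rep_simple]
    by_cases hk : Even k
    · have hk' : ¬ Even (k + 1) := by simp [hk, parity_simps]
      simp only [hk, hk', if_true, if_false]
      rw [refl_alt_step, add_comm]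
      rfl
    · have hk' : Even (k + 1) := by simp [hk, parity_simps]
      simp only [hk, hk', if_true, if_false]
      rw [refl_alt_step, add_comm, M.symmetric j i]
      rfl

/-- If `i` is not a right descent of `w`, then `w eᵢ` has nonnegative coordinates.  One splits
off from `w` a maximal alternating suffix in `i` and a right descent `j`; both `i` and `j` are
ascents of the remaining, shorter, factor. -/
theorem rep_nonneg (w : W) (i : B) (h : cs.length w < cs.length (w * cs.simple i)) :
    0 ≤ rep cs w (e i) := by
  induction hn : cs.length w using Nat.strong_induction_on generalizing w i with
  | _ n IH =>
  subst hn
  rcases eq_or_ne w 1 with rfl | hw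
  · simp
  obtain ⟨j, hj⟩ := cs.exists_rightDescent_of_ne_one hw
  have hij : i ≠ j := by
    rintro rfl
    exact absurd hj (by unfold CoxeterSystem.IsRightDescent; lia)
  -- the statement for a partial splitting `w = v * u`, with `u` alternating of length `k`
  have main : ∀ (n : ℕ) (v : W) (k : ℕ), cs.length v = n → 1 ≤ k →
      w = v * cs.wordProd (CoxeterSystem.alternatingWord i j k) →
      cs.length w = cs.length v + k → 0 ≤ rep cs w (e i) := by
    intro n
    induction n using Nat.strong_induction_on with
    | _ n ihn =>
      intro v k hv hk hw' hl
      by_cases hd : cs.length (v * cs.simple (if Even k then j else i)) < cs.length v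
      · refine ihn _ (hv ▸ hd) (v * cs.simple (if Even k then j else i)) (k + 1) rfl (by lia)
          ?_ ?_
        · rw [CoxeterSystem.alternatingWord_succ', cs.wordProd_cons, mul_assoc,
            cs.simple_mul_simple_cancel_left, hw']
        · have := cs.length_mul_simple v (if Even k then j else i)
          lia
      · have hd1 : cs.length v < cs.length (v * cs.simple (if Even k then j else i)) := by
          have := cs.length_mul_simple v (if Even k then j else i)
          lia
        have hd2 : cs.length v < cs.length (v * cs.simple (if Even k then i else j)) := by
          by_contra hcon
          obtain ⟨k', rfl⟩ : ∃ k', k = k' + 1 := ⟨k - 1, by lia⟩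
          rw [CoxeterSystem.alternatingWord_succ', cs.wordProd_cons] at hw'
          have hp : (if Even (k' + 1) then i else j) = (if Even k' then j else i) := by
            by_cases hk : Even k'
            · have hk' : ¬ Even (k' + 1) := by simp [hk, parity_simps]
              simp [hk, hk']
            · have hk' : Even (k' + 1) := by simp [hk, parity_simps]
              simp [hk, hk']
          rw [hp] at hcon
          rw [← mul_assoc] at hw'
          have h1 := cs.length_mul_le (v * cs.simple (if Even k' then j else i))
            (cs.wordProd (CoxeterSystem.alternatingWord i j k'))
          rw [← hw'] at h1
          have h2 := cs.length_wordProd_le (CoxeterSystem.alternatingWord i j k')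
          rw [CoxeterSystem.length_alternatingWord] at h2
          have := cs.length_mul_simple v (if Even k' then j else i)
          lia
        have hle : M i j ≠ 0 → k + 1 ≤ M i j := by
          intro h0
          by_contra hcon
          apply cs.not_isReduced_alternatingWord j i (M.symmetric i j ▸ h0)
            (m := k + 1) (by rw [M.symmetric j i]; lia)
          have h1 : w * cs.simple i =
              v * cs.wordProd (CoxeterSystem.alternatingWord j i (k + 1)) := by
            rw [CoxeterSystem.alternatingWord_succ, cs.wordProd_concat, hw', mul_assoc]
          unfold CoxeterSystem.IsReduced
          have h2 := cs.length_wordProd_le (CoxeterSystem.alternatingWord j i (k + 1))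
          have h3 := cs.length_mul_le v
            (cs.wordProd (CoxeterSystem.alternatingWord j i (k + 1)))
          rw [← h1] at h3
          rw [CoxeterSystem.length_alternatingWord] at h2 ⊢
          lia
        have h1 := seqA_nonneg (m := M i j) (k := k + 1) (M.off_diagonal i j hij) hle
        have h2 := seqA_nonneg (m := M i j) (k := k) (M.off_diagonal i j hij)
          (fun h => (hle h).trans' (by lia))
        have e1 := IH (cs.length v) (by lia) v _ hd1 rfl
        have e2 := IH (cs.length v) (by lia) v _ hd2 rfl
        rw [hw', rep_mul_apply, rep_alternating, map_add, map_smul, map_smul]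
        exact add_nonneg (smul_nonneg h1 e2) (smul_nonneg h2 e1)
  refine main _ (w * cs.simple j) 1 rfl le_rfl ?_ ?_
  · simp [CoxeterSystem.alternatingWord]
  · have := cs.length_mul_simple w j
    unfold CoxeterSystem.IsRightDescent at hj
    lia

theorem rep_nonpos (w : W) (i : B) (h : cs.length (w * cs.simple i) < cs.length w) :
    rep cs w (e i) ≤ 0 := by
  have := rep_nonneg cs (w * cs.simple i) i (by simpa using h)
  rw [rep_mul_apply, rep_simple, refl_self, map_neg] at this
  exact neg_nonneg.1 this

lemma rep_nonneg_or_nonpos (w : W) (i : B) : 0 ≤ rep cs w (e i) ∨ rep cs w (e i) ≤ 0 := by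
  rcases cs.length_mul_simple w i with h | h
  · exact Or.inl (rep_nonneg cs w i (by lia))
  · exact Or.inr (rep_nonpos cs w i (by lia))

/-! ### Roots -/

/-- A root: a vector in the orbit of a simple root. -/
def IsRoot (β : B →₀ ℝ) : Prop := ∃ (w : W) (i : B), β = rep cs w (e i)

lemma isRoot_e (i : B) : IsRoot cs (e i) := ⟨1, i, by simp⟩

variable {cs}

lemma IsRoot.rep {β : B →₀ ℝ} (h : IsRoot cs β) (w : W) : IsRoot cs (rep cs w β) := by
  obtain ⟨v, i, rfl⟩ := h
  exact ⟨w * v, i, by rw [rep_mul_apply]⟩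

lemma IsRoot.refl {β : B →₀ ℝ} (h : IsRoot cs β) (i : B) : IsRoot cs (refl M i β) := by
  rw [← rep_simple cs]
  exact h.rep _

lemma IsRoot.ne_zero {β : B →₀ ℝ} (h : IsRoot cs β) : β ≠ 0 := by
  obtain ⟨v, i, rfl⟩ := h
  intro h
  exact e_ne_zero i (rep_injective cs v (h.trans (map_zero _).symm))

lemma IsRoot.sign {β : B →₀ ℝ} (h : IsRoot cs β) : 0 ≤ β ∨ β ≤ 0 := by
  obtain ⟨v, i, rfl⟩ := h
  exact rep_nonneg_or_nonpos cs v i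

lemma IsRoot.neg {β : B →₀ ℝ} (h : IsRoot cs β) : IsRoot cs (-β) := by
  obtain ⟨v, i, rfl⟩ := h
  refine ⟨v * cs.simple i, i, ?_⟩
  rw [rep_mul_apply, rep_simple, refl_self, map_neg]

variable (M) in
/-- The symmetric bilinear form of the geometric representation. -/
noncomputable def form : (B →₀ ℝ) →ₗ[ℝ] (B →₀ ℝ) →ₗ[ℝ] ℝ :=
  Finsupp.linearCombination ℝ (bil M)

lemma form_e (i : B) (x : B →₀ ℝ) : form M (e i) x = bil M i x := by
  simp [form]

lemma form_e_right (i : B) (x : B →₀ ℝ) : form M x (e i) = bil M i x := by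
  induction x using Finsupp.induction_linear with
  | zero => simp
  | add x y hx hy => simp [hx, hy]
  | single j a =>
    have : (Finsupp.single j a : B →₀ ℝ) = a • e j := by simp
    rw [this, map_smul, map_smul, LinearMap.smul_apply, form_e, bil_symm]

lemma form_refl (i : B) (x y : B →₀ ℝ) : form M (refl M i x) (refl M i y) = form M x y := by
  simp only [refl_apply, map_sub, map_smul, LinearMap.sub_apply, LinearMap.smul_apply, form_e,
    form_e_right, bil_self, smul_eq_mul]
  ring

lemma form_rep (w : W) (x y : B →₀ ℝ) : form M (rep cs w x) (rep cs w y) = form M x y := by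
  induction w using cs.simple_induction_left generalizing x y with
  | one => simp
  | mul_simple_left w i ih => rw [rep_mul_apply, rep_mul_apply, rep_simple, form_refl, ih]

lemma IsRoot.form_self {β : B →₀ ℝ} (h : IsRoot cs β) : form M β β = 1 := by
  obtain ⟨v, i, rfl⟩ := h
  rw [form_rep, form_e, bil_self]

/-- A simple reflection permutes the positive roots other than its own simple root. -/
lemma refl_pos {β : B →₀ ℝ} (h : IsRoot cs β) (hβ : 0 ≤ β) {i : B} (hi : β ≠ e i) :
    0 ≤ refl M i β := by
  -- if all coordinates other than `i` vanish, then `β` is a positive unit multiple of `eᵢ`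
  obtain ⟨j, hji, hj⟩ : ∃ j, j ≠ i ∧ β j ≠ 0 := by
    by_contra hcon
    push Not at hcon
    have hb : β = β i • e i := by
      ext j
      rcases eq_or_ne j i with rfl | hji
      · simp
      · simp [hcon j hji, hji.symm]
    have h1 := h.form_self
    rw [hb, map_smul, map_smul, LinearMap.smul_apply, form_e, bil_self] at h1
    have h2 : 0 ≤ β i := hβ i
    have h3 : β i = 1 := by
      simp only [smul_eq_mul, mul_one] at h1
      nlinarith
    rw [h3, one_smul] at hb
    exact hi hb
  rcases (h.refl i).sign with h' | h'
  · exact h'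
  · exfalso
    have h1 := h' j
    rw [refl_apply] at h1
    have h2 : 0 ≤ β j := hβ j
    have h3 : (e i : B →₀ ℝ) j = 0 := by simp [hji.symm]
    simp only [Finsupp.coe_sub, Pi.sub_apply, Finsupp.coe_smul, Pi.smul_apply, h3, smul_zero,
      sub_zero, Finsupp.coe_zero, Pi.zero_apply] at h1
    exact hj (le_antisymm h1 h2)

lemma refl_isRoot_eq (w : W) (i : B) (x : B →₀ ℝ) :
    rep cs (w * cs.simple i * w⁻¹) x =
      x - (2 * form M (rep cs w (e i)) x) • rep cs w (e i) := by
  rw [rep_mul_apply, rep_mul_apply, rep_simple, refl_apply, map_sub, map_smul, rep_apply_inv,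
    ← form_e, ← form_rep (cs := cs) w (e i), rep_apply_inv]

/-! ### The closed chamber and its stabilizers -/

/-- The closed fundamental chamber in the dual space. -/
def chamber (f : Module.Dual ℝ (B →₀ ℝ)) : Prop := ∀ i, 0 ≤ f (e i)

/-- The generators whose simple roots vanish at `f`. -/
def zeroSet (f : Module.Dual ℝ (B →₀ ℝ)) : Set B := {i | f (e i) = 0}

lemma apply_eq_sum (f : Module.Dual ℝ (B →₀ ℝ)) (x : B →₀ ℝ) :
    f x = x.sum fun i a => a * f (e i) := by
  conv_lhs => rw [← Finsupp.sum_single x]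
  rw [Finsupp.sum, map_sum]
  refine Finset.sum_congr rfl fun i _ => ?_
  rw [← mul_one (x i), ← smul_eq_mul, ← Finsupp.smul_single, map_smul]
  simp

lemma chamber.nonneg {f : Module.Dual ℝ (B →₀ ℝ)} (hf : chamber f) {x : B →₀ ℝ} (hx : 0 ≤ x) :
    0 ≤ f x := by
  rw [apply_eq_sum]
  exact Finset.sum_nonneg fun i _ => mul_nonneg (hx i) (hf i)

lemma chamber.nonpos {f : Module.Dual ℝ (B →₀ ℝ)} (hf : chamber f) {x : B →₀ ℝ} (hx : x ≤ 0) :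
    f x ≤ 0 := by
  have := hf.nonneg (neg_nonneg.2 hx)
  rw [map_neg] at this
  linarith

/-- A functional vanishing on `eᵢ` is fixed by the `i`-th reflection. -/
lemma comp_refl {f : Module.Dual ℝ (B →₀ ℝ)} {i : B} (h : f (e i) = 0) :
    f ∘ₗ rep cs (cs.simple i) = f := by
  refine LinearMap.ext fun x => ?_
  rw [LinearMap.comp_apply, rep_simple, refl_apply, map_sub, map_smul, h, smul_zero, sub_zero]

lemma comp_rep_mul (f : Module.Dual ℝ (B →₀ ℝ)) (v w : W) :
    f ∘ₗ rep cs (v * w) = (f ∘ₗ rep cs v) ∘ₗ rep cs w := by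
  rw [map_mul]; rfl

lemma comp_rep_one (f : Module.Dual ℝ (B →₀ ℝ)) : f ∘ₗ rep cs 1 = f := by
  rw [map_one]; rfl

/-- Two points of the closed chamber in the same orbit coincide, and the stabilizer of a point of
the closed chamber is the standard parabolic subgroup of its zero set. -/
theorem chamber_stab {f : Module.Dual ℝ (B →₀ ℝ)} (hf : chamber f) (w : W)
    (hw : chamber (f ∘ₗ rep cs w)) :
    f ∘ₗ rep cs w = f ∧ w ∈ cs.parabolic (zeroSet f) := by
  induction hn : cs.length w using Nat.strong_induction_on generalizing w with
  | _ n IH =>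
  subst hn
  rcases eq_or_ne w 1 with rfl | hw1
  · exact ⟨comp_rep_one f, one_mem _⟩
  obtain ⟨i, hi⟩ := cs.exists_rightDescent_of_ne_one hw1
  have h0 : (f ∘ₗ rep cs w) (e i) = 0 :=
    le_antisymm (hf.nonpos (rep_nonpos cs w i hi)) (hw i)
  have h1 : f ∘ₗ rep cs (w * cs.simple i) = f ∘ₗ rep cs w := by
    rw [comp_rep_mul, comp_refl h0]
  obtain ⟨h2, h3⟩ := IH _ hi (w * cs.simple i) (by rw [h1]; exact hw) rfl
  rw [h1] at h2
  refine ⟨h2, ?_⟩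
  rw [h2] at h0
  have h4 : cs.simple i ∈ cs.parabolic (zeroSet f) :=
    Subgroup.subset_closure ⟨i, h0, rfl⟩
  simpa using mul_mem h3 h4

lemma comp_rep_parabolic {f : Module.Dual ℝ (B →₀ ℝ)} {T : Set B} (hT : T ⊆ zeroSet f) {w : W}
    (hw : w ∈ cs.parabolic T) : f ∘ₗ rep cs w = f := by
  induction hw using Subgroup.closure_induction with
  | mem x hx =>
    obtain ⟨i, hi, rfl⟩ := hx
    exact comp_refl (hT hi)
  | one => exact comp_rep_one f
  | mul x y _ _ hx hy => rw [comp_rep_mul, hx, hy]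
  | inv x _ hx =>
    conv_lhs => rw [← hx]
    rw [← comp_rep_mul, mul_inv_cancel, comp_rep_one]

/-! ### The interior of the Tits cone -/

variable (cs) in
/-- The positive roots that are not positive at `f`.  Finiteness of this set characterizes the
interior of the Tits cone. -/
def badRoots (f : Module.Dual ℝ (B →₀ ℝ)) : Set (B →₀ ℝ) := {β | IsRoot cs β ∧ 0 ≤ β ∧ f β ≤ 0}

lemma badRoots_comp_refl (f : Module.Dual ℝ (B →₀ ℝ)) (i : B) :
    badRoots cs (f ∘ₗ rep cs (cs.simple i)) ⊆
      insert (e i) (refl M i '' (badRoots cs f \ {e i})) := by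
  rintro β ⟨hr, hp, hf⟩
  rcases eq_or_ne β (e i) with rfl | hne
  · exact Set.mem_insert _ _
  refine Set.mem_insert_of_mem _ ⟨refl M i β, ⟨⟨hr.refl i, refl_pos hr hp hne, ?_⟩, ?_⟩,
    refl_refl M i β⟩
  · rwa [LinearMap.comp_apply, rep_simple] at hf
  · intro h
    have h1 : refl M i β = e i := h
    have h2 := refl_refl M i β
    rw [h1, refl_self] at h2
    have h3 : 0 ≤ β i := hp i
    rw [← h2] at h3
    simp at h3
    linarith

lemma badRoots_comp_finite {f : Module.Dual ℝ (B →₀ ℝ)} (hf : (badRoots cs f).Finite) (w : W) :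
    (badRoots cs (f ∘ₗ rep cs w)).Finite := by
  induction w using cs.simple_induction_right with
  | one => rwa [comp_rep_one]
  | mul_simple_right w i ih =>
    rw [comp_rep_mul]
    exact (((ih.subset Set.sdiff_subset).image _).insert _).subset (badRoots_comp_refl _ i)

/-- A functional with finitely many bad roots can be moved into the closed chamber. -/
theorem exists_chamber {f : Module.Dual ℝ (B →₀ ℝ)} (hf : (badRoots cs f).Finite) :
    ∃ w, chamber (f ∘ₗ rep cs w) := by
  induction hn : (badRoots cs f).ncard using Nat.strong_induction_on generalizing f with
  | _ n IH =>
  subst hn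
  by_cases hc : chamber f
  · exact ⟨1, by rwa [comp_rep_one]⟩
  unfold chamber at hc
  push Not at hc
  obtain ⟨i, hi⟩ := hc
  have hmem : e i ∈ badRoots cs f := ⟨isRoot_e cs i, Finsupp.single_nonneg.2 zero_le_one, hi.le⟩
  have hsub : badRoots cs (f ∘ₗ rep cs (cs.simple i)) ⊆ refl M i '' (badRoots cs f \ {e i}) := by
    intro β hβ
    rcases badRoots_comp_refl f i hβ with h | h
    · exfalso
      have := hβ.2.2
      rw [h, LinearMap.comp_apply, rep_simple, refl_self, map_neg] at this
      linarith
    · exact h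
  have hfin : (badRoots cs f \ {e i}).Finite := hf.subset Set.sdiff_subset
  have hlt : (badRoots cs (f ∘ₗ rep cs (cs.simple i))).ncard < (badRoots cs f).ncard :=
    calc _ ≤ (refl M i '' (badRoots cs f \ {e i})).ncard := Set.ncard_le_ncard hsub (hfin.image _)
      _ ≤ (badRoots cs f \ {e i}).ncard := Set.ncard_image_le hfin
      _ < _ := Set.ncard_sdiff_singleton_lt_of_mem hmem hf
  obtain ⟨w, hw⟩ := IH _ hlt (badRoots_comp_finite hf _) rfl
  exact ⟨cs.simple i * w, by rwa [comp_rep_mul]⟩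

/-- An element of `W_T` sends no `eⱼ`, `j ∉ T`, to a negative vector, since it does not change the
`j`-th coordinate.  Hence it is trivial once it fixes all `eᵢ`, `i ∈ T`. -/
lemma eq_one_of_fix {T : Set B} {w : W} (hw : w ∈ cs.parabolic T)
    (h : ∀ i ∈ T, rep cs w (e i) = e i) : w = 1 := by
  have hcoord : ∀ j ∉ T, ∀ x, (rep cs w x) j = x j := by
    clear h
    intro j hj
    induction hw using Subgroup.closure_induction with
    | mem x hx =>
      obtain ⟨i, hi, rfl⟩ := hx
      intro x
      have hij : i ≠ j := fun h => hj (h ▸ hi)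
      simp [rep_simple, refl_apply, hij]
    | one => simp
    | mul x y _ _ hx hy => intro z; rw [rep_mul_apply, hx, hy]
    | inv x _ hx => intro z; rw [← hx (rep cs x⁻¹ z), rep_apply_inv]
  by_contra hw1
  obtain ⟨i, hi⟩ := cs.exists_rightDescent_of_ne_one hw1
  have h1 := rep_nonpos cs w i hi i
  by_cases hiT : i ∈ T
  · rw [h i hiT] at h1
    simp at h1
    linarith
  · rw [hcoord i hiT] at h1
    simp at h1
    linarith

/-- If `f` has finitely many bad roots, then the parabolic subgroup of its zero set is finite,
since it acts faithfully on the finite set of roots vanishing at `f`. -/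
theorem spherical_of_finite {f : Module.Dual ℝ (B →₀ ℝ)}
    (hfin : (badRoots cs f).Finite) : cs.IsSpherical (zeroSet f) := by
  set Z : Set (B →₀ ℝ) := badRoots cs f ∪ (fun x => -x) '' badRoots cs f with hZ
  have hZfin : Z.Finite := hfin.union (hfin.image _)
  have hmem : ∀ w ∈ cs.parabolic (zeroSet f), ∀ i ∈ zeroSet f, rep cs w (e i) ∈ Z := by
    intro w hw i hi
    have h0 : f (rep cs w (e i)) = 0 := by
      have h1 := comp_rep_parabolic (cs := cs) (le_refl (zeroSet f)) hw
      have h2 := congrArg (fun g => g (e i)) h1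
      exact h2.trans hi
    have hr : IsRoot cs (rep cs w (e i)) := ⟨w, i, rfl⟩
    rcases hr.sign with h | h
    · exact Or.inl ⟨hr, h, h0.le⟩
    · exact Or.inr ⟨-rep cs w (e i), ⟨hr.neg, neg_nonneg.2 h, by simp [h0]⟩, by simp⟩
  have : Finite Z := hZfin
  by_cases hB : (zeroSet f).Finite
  · have : Finite (zeroSet f) := hB
    let F : cs.parabolic (zeroSet f) → (zeroSet f → Z) :=
      fun w i => ⟨rep cs w (e i.1), hmem w w.2 i i.2⟩
    refine Finite.of_injective F fun v w hvw => ?_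
    have h1 : (v : W)⁻¹ * (w : W) = 1 := by
      refine eq_one_of_fix (cs := cs) (mul_mem (inv_mem v.2) w.2) fun i hi => ?_
      have := congrArg Subtype.val (congrFun hvw ⟨i, hi⟩)
      simp only [F] at this
      rw [rep_mul_apply, ← this, rep_inv_apply]
    exact Subtype.ext (inv_mul_eq_one.1 h1)
  · exact absurd (Set.Finite.of_injOn (f := fun i => (e i : B →₀ ℝ)) (t := Z)
      (fun i hi => by simpa using hmem 1 (one_mem _) i hi)
      (fun i _ j _ h => Finsupp.single_left_injective one_ne_zero h) hZfin) hB

open Classical in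
/-- A point of the closed chamber with zero set `T`. -/
noncomputable def facePoint (T : Set B) : Module.Dual ℝ (B →₀ ℝ) :=
  Finsupp.linearCombination ℝ (fun i => if i ∈ T then (0 : ℝ) else 1)

lemma facePoint_mem {T : Set B} {i : B} (h : i ∈ T) : facePoint T (e i) = 0 := by
  simp [facePoint, h]

lemma facePoint_not_mem {T : Set B} {i : B} (h : i ∉ T) : facePoint T (e i) = 1 := by
  simp [facePoint, h]

lemma chamber_facePoint (T : Set B) : chamber (facePoint T) := by
  intro i
  by_cases h : i ∈ T
  · rw [facePoint_mem h]
  · rw [facePoint_not_mem h]; exact zero_le_one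

lemma zeroSet_facePoint (T : Set B) : zeroSet (facePoint T) = T := by
  ext i
  by_cases h : i ∈ T
  · simp [zeroSet, facePoint_mem h, h]
  · simp [zeroSet, facePoint_not_mem h, h]

/-- A spherical face has finitely many bad roots: the bad roots vanish at the face point, so their
reflections stabilize it, and a positive root is determined by its reflection. -/
theorem badRoots_facePoint {T : Set B} (hT : cs.IsSpherical T) :
    (badRoots cs (facePoint T)).Finite := by
  have hex : ∀ β : badRoots cs (facePoint T), ∃ r ∈ cs.parabolic T,
      ∀ x, rep cs r x = x - (2 * form M β.1 x) • β.1 := by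
    rintro ⟨β, ⟨w, i, rfl⟩, hp, hf⟩
    have h0 : facePoint T (rep cs w (e i)) = 0 := le_antisymm hf ((chamber_facePoint T).nonneg hp)
    refine ⟨w * cs.simple i * w⁻¹, ?_, refl_isRoot_eq w i⟩
    have h1 : facePoint T ∘ₗ rep cs (w * cs.simple i * w⁻¹) = facePoint T := by
      refine LinearMap.ext fun x => ?_
      rw [LinearMap.comp_apply, refl_isRoot_eq, map_sub, map_smul, h0, smul_zero, sub_zero]
    have h2 := (chamber_stab (cs := cs) (chamber_facePoint T) (w * cs.simple i * w⁻¹)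
      (by rw [h1]; exact chamber_facePoint T)).2
    rwa [zeroSet_facePoint] at h2
  choose r hr hrx using hex
  have : Finite (cs.parabolic T) := hT
  refine Set.finite_coe_iff.1 ?_
  refine Finite.of_injective (fun β => (⟨r β, hr β⟩ : cs.parabolic T)) ?_
  intro β γ hβγ
  have hrr : r β = r γ := congrArg Subtype.val hβγ
  have h1 := hrx β β.1
  rw [hrr, hrx γ β.1, β.2.1.form_self] at h1
  -- `β` is a positive multiple of `γ` of the same norm
  have h2 : β.1 = form M γ.1 β.1 • γ.1 := by
    have h3 : (2 * form M γ.1 β.1) • γ.1 = (2 : ℝ) • β.1 := by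
      simpa using sub_right_injective h1
    rw [mul_smul] at h3
    exact (smul_right_injective _ (two_ne_zero (α := ℝ)) h3).symm
  set c := form M γ.1 β.1
  have h4 : c * c = 1 := by
    have := β.2.1.form_self
    rw [h2] at this
    simpa [γ.2.1.form_self] using this
  rcases mul_self_eq_one_iff.1 h4 with h | h
  · rw [h, one_smul] at h2
    exact Subtype.ext h2
  · exfalso
    rw [h, neg_smul, one_smul] at h2
    have h5 : 0 ≤ -γ.1 := h2 ▸ β.2.2.1
    exact γ.2.1.ne_zero (le_antisymm (neg_nonneg.1 h5) γ.2.2.1)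

/-! ### Finite subgroups -/

/-- Tits: every finite subgroup is conjugate into a finite standard parabolic subgroup.  The sum
of the orbit of an interior point of the chamber is a fixed point in the interior of the Tits
cone. -/
theorem exists_spherical_of_finite (H : Subgroup W) [Finite H] :
    ∃ (g : W) (T : Set B), cs.IsSpherical T ∧ ∀ h ∈ H, g⁻¹ * h * g ∈ cs.parabolic T := by
  have := Fintype.ofFinite H
  set x : Module.Dual ℝ (B →₀ ℝ) := facePoint ∅ with hx
  set f : Module.Dual ℝ (B →₀ ℝ) := ∑ h : H, x ∘ₗ rep cs (h : W) with hf
  have hxfin : (badRoots cs x).Finite := by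
    refine badRoots_facePoint (cs := cs) ?_
    unfold CoxeterSystem.IsSpherical CoxeterSystem.parabolic
    rw [Set.image_empty, Subgroup.closure_empty]
    infer_instance
  have hfapp : ∀ y, f y = ∑ h : H, x (rep cs (h : W) y) := by
    intro y
    simp [hf, LinearMap.sum_apply]
  have hffin : (badRoots cs f).Finite := by
    refine (Set.finite_iUnion fun h : H => badRoots_comp_finite hxfin (h : W)).subset ?_
    rintro β ⟨hr, hp, hb⟩
    by_contra hcon
    simp only [Set.mem_iUnion, not_exists] at hcon
    have hpos : ∀ h : H, 0 < x (rep cs (h : W) β) := by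
      intro h
      by_contra hle
      exact hcon h ⟨hr, hp, not_lt.1 hle⟩
    rw [hfapp] at hb
    exact absurd hb (not_le.2 (Finset.sum_pos (fun h _ => hpos h) ⟨1, Finset.mem_univ _⟩))
  have hfix : ∀ h ∈ H, f ∘ₗ rep cs h = f := by
    intro h hh
    refine LinearMap.ext fun y => ?_
    rw [LinearMap.comp_apply, hfapp, hfapp]
    refine Fintype.sum_equiv (Equiv.mulRight (⟨h, hh⟩ : H)) _ _ fun k => ?_
    simp
  obtain ⟨g, hg⟩ := exists_chamber hffin
  refine ⟨g, _, spherical_of_finite (badRoots_comp_finite hffin g), fun h hh => ?_⟩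
  refine (chamber_stab (cs := cs) hg (g⁻¹ * h * g) ?_).2
  have : (f ∘ₗ rep cs g) ∘ₗ rep cs (g⁻¹ * h * g) = f ∘ₗ rep cs g := by
    rw [← comp_rep_mul, mul_assoc, mul_inv_cancel_left, comp_rep_mul, hfix h hh]
  rw [this]
  exact hg

/-- If `W_U`, with `U` maximal spherical, is conjugate into a spherical `W_T`, then `T = U`.  A
translate `p` of the face point of `T` is fixed by `W_U`.  If some `eᵢ`, `i ∉ U`, were not positive
at `p`, it would vanish somewhere on the segment from the face point of `U` to `p`, and then
`insert i U` would be spherical.  So `p` lies in the closed chamber, with zero set `U`. -/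
theorem eq_of_conj {U T : Set B} (hU : cs.IsMaxSpherical U) (hT : cs.IsSpherical T)
    (g : W) (h : ∀ u ∈ cs.parabolic U, g⁻¹ * u * g ∈ cs.parabolic T) : T = U := by
  set p := facePoint T ∘ₗ rep cs g⁻¹ with hp
  have hpfin : (badRoots cs p).Finite := badRoots_comp_finite (badRoots_facePoint hT) _
  have hp0 : ∀ b ∈ U, p (e b) = 0 := by
    intro b hb
    have h1 : p ∘ₗ rep cs (cs.simple b) = p := by
      have h2 := h _ (Subgroup.subset_closure ⟨b, hb, rfl⟩)
      have h3 := comp_rep_parabolic (cs := cs) (zeroSet_facePoint T).ge h2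
      have h4 : g⁻¹ * cs.simple b = (g⁻¹ * cs.simple b * g) * g⁻¹ := by simp
      rw [hp, ← comp_rep_mul, h4, comp_rep_mul, h3]
    have h2 := congrArg (fun f => f (e b)) h1
    simp only [LinearMap.comp_apply, rep_simple, refl_self, map_neg] at h2
    linarith
  have hpos : ∀ i ∉ U, 0 < p (e i) := by
    by_contra hcon
    push Not at hcon
    obtain ⟨i, hiU, hi0⟩ := hcon
    -- up to scaling, the point of the segment from the face point of `U` to `p` where `eᵢ` vanishes
    set q := (-p (e i)) • facePoint U + p with hq
    have hqapp : ∀ x, q x = -p (e i) * facePoint U x + p x := fun x => rfl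
    have hqU : ∀ b ∈ U, q (e b) = 0 := by
      intro b hb
      rw [hqapp, facePoint_mem hb, hp0 b hb]; simp
    have hqi : q (e i) = 0 := by
      rw [hqapp, facePoint_not_mem hiU]; ring
    have hqfin : (badRoots cs q).Finite := by
      refine hpfin.subset ?_
      rintro β ⟨hr, hβ, hqβ⟩
      refine ⟨hr, hβ, ?_⟩
      rw [hqapp] at hqβ
      have := mul_nonneg (neg_nonneg.2 hi0) ((chamber_facePoint U).nonneg hβ)
      linarith
    have := hU.2 _ (spherical_of_finite hqfin) hqU
    exact hiU (this ▸ hqi)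
  have hpc : chamber p := by
    intro j
    by_cases hj : j ∈ U
    · exact (hp0 j hj).ge
    · exact (hpos j hj).le
  have hz : zeroSet p = U := by
    ext j
    by_cases hj : j ∈ U
    · simp [zeroSet, hp0 j hj, hj]
    · simp [zeroSet, (hpos j hj).ne', hj]
  have := (chamber_stab (cs := cs) (chamber_facePoint T) g⁻¹ hpc).1
  rw [← zeroSet_facePoint T, ← this, hz]

/-! ### Commuting generators -/

lemma form_zero_of_comm {i j : B} (hij : i ≠ j)
    (h : cs.simple i * cs.simple j = cs.simple j * cs.simple i) : bil M i (e j) = 0 := by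
  have h1 := congrArg (fun w => (rep cs w (e j)) i) h
  simp only [rep_mul_apply, rep_simple, refl_self, map_neg] at h1
  simp only [refl_apply, map_sub, map_smul, bil_self] at h1
  have h2 : (e j : B →₀ ℝ) i = 0 := by simp [hij.symm]
  simp [hij.symm] at h1
  linarith

/-- Generators joined by an odd label do not commute. -/
lemma not_comm_of_odd {i j : B} (hij : i ≠ j) (h : Odd (M i j)) :
    cs.simple i * cs.simple j ≠ cs.simple j * cs.simple i := by
  intro hc
  have h1 := form_zero_of_comm hij hc
  rw [bil_e, neg_eq_zero] at h1
  have h3 : (3 : ℝ) ≤ M i j := by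
    have := M.off_diagonal i j hij
    obtain ⟨k, hk⟩ := h
    exact_mod_cast (by lia : 3 ≤ M i j)
  have h4 : π / M i j < π / 2 := by
    apply div_lt_div_of_pos_left pi_pos <;> linarith
  have h5 : 0 < cos (π / M i j) := by
    apply cos_pos_of_mem_Ioo ⟨?_, h4⟩
    have : 0 < π / M i j := by positivity
    linarith [pi_pos]
  linarith

/-- Pairwise commuting generators are independent. -/
lemma two_pow_le_card [Finite B] {T : Set B} (hT : cs.IsSpherical T)
    (hcomm : ∀ i ∈ T, ∀ j ∈ T, cs.simple i * cs.simple j = cs.simple j * cs.simple i) :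
    2 ^ T.ncard ≤ Nat.card (cs.parabolic T) := by
  have hTf : T.Finite := Set.toFinite _
  have hex : ∀ A : Set B, A.Finite → A ⊆ T → ∃ w ∈ cs.parabolic T,
      (∀ i ∈ A, rep cs w (e i) = -e i) ∧ (∀ i ∈ T, i ∉ A → rep cs w (e i) = e i) := by
    intro A hA
    induction A, hA using Set.Finite.induction_on with
    | empty => exact fun _ => ⟨1, one_mem _, by simp, by simp⟩
    | @insert a A ha _ ih =>
      intro hAT
      obtain ⟨w, hw, h1, h2⟩ := ih ((Set.subset_insert _ _).trans hAT)
      have haT := hAT (Set.mem_insert _ _)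
      have hfix : ∀ i ∈ T, i ≠ a → refl M a (e i) = e i := by
        intro i hi hia
        rw [refl_apply, form_zero_of_comm (cs := cs) hia.symm (hcomm a haT i hi)]
        simp
      refine ⟨cs.simple a * w, mul_mem (Subgroup.subset_closure ⟨a, haT, rfl⟩) hw, ?_, ?_⟩
      · intro i hi
        rw [rep_mul_apply, rep_simple]
        rcases hi with rfl | hi
        · rw [h2 i haT ha, refl_self]
        · rw [h1 i hi, map_neg, hfix i (hAT (Or.inr hi)) (by rintro rfl; exact ha hi)]
      · intro i hi hiA
        have hia : i ≠ a := by rintro rfl; exact hiA (Set.mem_insert _ _)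
        rw [rep_mul_apply, rep_simple, h2 i hi (fun h => hiA (Or.inr h)), hfix i hi hia]
  have hex' : ∀ A : 𝒫 T, ∃ w : cs.parabolic T, (∀ i ∈ A.1, rep cs w.1 (e i) = -e i) ∧
      (∀ i ∈ T, i ∉ A.1 → rep cs w.1 (e i) = e i) := by
    rintro ⟨A, hA⟩
    obtain ⟨w, hw, h⟩ := hex A (hTf.subset hA) hA
    exact ⟨⟨w, hw⟩, h⟩
  choose F hF1 hF2 using hex'
  have hne : ∀ i : B, (e i : B →₀ ℝ) ≠ -e i := by
    intro i h
    exact e_ne_zero i (self_eq_neg.1 h)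
  have hinj : Function.Injective F := by
    intro A A' hAA
    apply Subtype.ext
    ext i
    constructor
    · intro hi
      by_contra hi'
      exact hne i ((hF2 A' i (A.2 hi) hi').symm.trans (hAA ▸ hF1 A i hi))
    · intro hi
      by_contra hi'
      exact hne i ((hF2 A i (A'.2 hi) hi').symm.trans (hAA ▸ hF1 A' i hi))
  have : Finite (cs.parabolic T) := hT
  have hcard := Nat.card_le_card_of_injective F hinj
  rwa [Nat.card_coe_set_eq, Set.ncard_powerset T] at hcard

/-! ### The abelianization -/

variable (cs) in
/-- The class of a generator in the abelianization. -/
def ab (i : B) : Abelianization W := Abelianization.of (cs.simple i)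

lemma ab_mul_self (i : B) : ab cs i * ab cs i = 1 := by
  rw [ab, ← map_mul, cs.simple_mul_simple_self, map_one]

lemma ab_eq_of_odd {i j : B} {n : ℕ} (hn : Odd n) (h : (cs.simple i * cs.simple j) ^ n = 1) :
    ab cs i = ab cs j := by
  have h1 : (ab cs i * ab cs j) ^ n = 1 := by
    rw [ab, ab, ← map_mul, ← map_pow, h, map_one]
  have h2 : (ab cs i * ab cs j) ^ 2 = 1 := by
    rw [mul_pow, pow_two, pow_two, ab_mul_self, ab_mul_self, one_mul]
  obtain ⟨k, rfl⟩ := hn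
  rw [pow_succ, pow_mul, h2, one_pow, one_mul] at h1
  rw [← mul_left_inj (ab cs j), h1, ab_mul_self]

lemma ab_eq_of_odd_matrix {i j : B} (h : Odd (M i j)) : ab cs i = ab cs j :=
  ab_eq_of_odd h (cs.simple_mul_simple_pow i j)

variable (cs) in
/-- A set of generators closed under odd edges defines a character of the abelianization. -/
lemma exists_char (A : Set B) (hA : ∀ i j, Odd (M i j) → i ∈ A → j ∈ A) :
    ∃ χ : Abelianization W →* Multiplicative (ZMod 2), ∀ i, χ (ab cs i) ≠ 1 ↔ i ∈ A := by
  classical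
  set f : B → Multiplicative (ZMod 2) :=
    fun i => if i ∈ A then Multiplicative.ofAdd 1 else 1 with hf
  have hsq : ∀ x : Multiplicative (ZMod 2), x * x = 1 := by decide
  have hl : M.IsLiftable f := by
    intro i j
    rcases Nat.even_or_odd (M i j) with ⟨k, hk⟩ | ho
    · rw [hk, ← two_mul, pow_mul, pow_two, hsq, one_pow]
    · have h1 : i ∈ A ↔ j ∈ A := ⟨hA i j ho, hA j i (M.symmetric i j ▸ ho)⟩
      have h2 : f i = f j := by simp only [hf, h1]
      rw [h2, hsq, one_pow]
  refine ⟨Abelianization.lift (cs.lift ⟨f, hl⟩), fun i => ?_⟩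
  rw [ab, Abelianization.lift_apply_of, cs.lift_apply_simple, hf]
  by_cases hi : i ∈ A
  · simp [hi]
  · simp [hi]

variable (cs) in
lemma exists_coord (c : Abelianization W) :
    ∃ χ : Abelianization W →* Multiplicative (ZMod 2), ∀ i, χ (ab cs i) ≠ 1 ↔ ab cs i = c :=
  exists_char cs {i | ab cs i = c} fun _ _ h hi => (ab_eq_of_odd_matrix h).symm.trans hi

variable (cs) in
/-- The coordinate at `c` with respect to the distinct classes of generators, which form a basis of
the abelianization over `ℤ/2`. -/
noncomputable def coord (c : Abelianization W) : Abelianization W →* Multiplicative (ZMod 2) :=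
  (exists_coord cs c).choose

lemma coord_ab (c : Abelianization W) (i : B) : coord cs c (ab cs i) ≠ 1 ↔ ab cs i = c :=
  (exists_coord cs c).choose_spec i

variable (cs) in
/-- The set of classes of generators occurring in an element of the abelianization. -/
def supp (v : Abelianization W) : Set (Abelianization W) := {c | coord cs c v ≠ 1}

lemma supp_ab (i : B) : supp cs (ab cs i) = {ab cs i} := by
  ext c
  change coord cs c (ab cs i) ≠ 1 ↔ _
  rw [coord_ab, Set.mem_singleton_iff, eq_comm]

lemma ab_ne_one (i : B) : ab cs i ≠ 1 := by
  intro h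
  have := (coord_ab (cs := cs) (ab cs i) i).2 rfl
  rw [h, map_one] at this
  exact this rfl

lemma supp_prod (A : Finset (Abelianization W)) (hA : (A : Set (Abelianization W)) ⊆
    Set.range (ab cs)) : supp cs (∏ c ∈ A, c) = A := by
  classical
  induction A using Finset.induction_on with
  | empty => ext c; simp [supp]
  | insert a A ha ih =>
    rw [Finset.coe_insert, Set.insert_subset_iff] at hA
    have ih' : ∀ c, coord cs c (∏ c ∈ A, c) ≠ 1 ↔ c ∈ A := fun c => by
      have := Set.ext_iff.1 (ih hA.2) c
      simpa [supp] using this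
    obtain ⟨i, rfl⟩ := hA.1
    ext c
    rw [Finset.prod_insert ha, Finset.mem_coe, Finset.mem_insert]
    change coord cs c _ ≠ 1 ↔ _
    rw [map_mul]
    have h1 := coord_ab (cs := cs) c i
    rcases eq_or_ne (ab cs i) c with rfl | hne
    · have h2 : coord cs (ab cs i) (∏ c ∈ A, c) = 1 := by
        by_contra h
        exact ha ((ih' _).1 h)
      simp [h2, h1.2 rfl]
    · have h2 : coord cs c (ab cs i) = 1 := by
        by_contra h
        exact hne (h1.1 h)
      rw [h2, one_mul, ih']
      simp [hne.symm]

variable (cs) in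
lemma exists_finset_prod (v : Abelianization W) : ∃ A : Finset (Abelianization W),
    (A : Set (Abelianization W)) ⊆ Set.range (ab cs) ∧ v = ∏ c ∈ A, c := by
  classical
  obtain ⟨w, rfl⟩ := QuotientGroup.mk_surjective v
  change ∃ A : Finset (Abelianization W), _ ∧ Abelianization.of w = _
  induction w using cs.simple_induction_left with
  | one => exact ⟨∅, by simp, by simp⟩
  | mul_simple_left w i ih =>
    obtain ⟨A, hA, hw⟩ := ih
    by_cases hi : ab cs i ∈ A
    · refine ⟨A.erase (ab cs i), fun c hc => hA (Finset.mem_of_mem_erase hc), ?_⟩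
      rw [map_mul, hw, ← Finset.mul_prod_erase A _ hi, ← mul_assoc]
      change ab cs i * ab cs i * _ = _
      rw [ab_mul_self, one_mul]
    · refine ⟨insert (ab cs i) A, ?_, ?_⟩
      · rw [Finset.coe_insert, Set.insert_subset_iff]
        exact ⟨⟨i, rfl⟩, hA⟩
      · rw [map_mul, hw, Finset.prod_insert hi]
        rfl

lemma supp_injective : Function.Injective (supp cs) := by
  intro v w h
  obtain ⟨A, hA, rfl⟩ := exists_finset_prod cs v
  obtain ⟨A', hA', rfl⟩ := exists_finset_prod cs w
  rw [supp_prod A hA, supp_prod A' hA'] at h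
  rw [Finset.coe_injective h]

lemma exists_supp [Finite B] {D : Set (Abelianization W)} (hD : D ⊆ Set.range (ab cs)) :
    ∃ v, supp cs v = D := by
  have hf : D.Finite := (Set.finite_range _).subset hD
  exact ⟨∏ c ∈ hf.toFinset, c, by rw [supp_prod _ (by simpa using hD)]; simp⟩

/-- The image of a parabolic subgroup in the abelianization is a coordinate subspace. -/
lemma mem_map_parabolic (T : Set B) (v : Abelianization W) :
    v ∈ (cs.parabolic T).map Abelianization.of ↔ supp cs v ⊆ ab cs '' T := by
  constructor
  · rintro ⟨w, hw, rfl⟩ c hc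
    by_contra hcT
    apply hc
    clear hc
    induction hw using Subgroup.closure_induction with
    | mem x hx =>
      obtain ⟨i, hi, rfl⟩ := hx
      by_contra h
      exact hcT ⟨i, hi, (coord_ab c i).1 h⟩
    | one => simp
    | mul x y _ _ hx hy => rw [map_mul, map_mul, hx, hy, one_mul]
    | inv x _ hx => rw [map_inv, map_inv, hx, inv_one]
  · intro h
    obtain ⟨A, hA, rfl⟩ := exists_finset_prod cs v
    rw [supp_prod A hA] at h
    refine prod_mem fun c hc => ?_
    obtain ⟨i, hi, rfl⟩ := h hc
    exact ⟨_, Subgroup.subset_closure ⟨i, hi, rfl⟩, rfl⟩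

lemma ncard_supp_subset [Finite B] {D : Set (Abelianization W)} (hD : D ⊆ Set.range (ab cs)) :
    {v | supp cs v ⊆ D}.ncard = 2 ^ D.ncard := by
  have h1 : supp cs '' {v | supp cs v ⊆ D} = 𝒫 D := by
    ext E
    constructor
    · rintro ⟨v, hv, rfl⟩
      exact hv
    · intro hE
      obtain ⟨v, rfl⟩ := exists_supp (cs := cs) (hE.trans hD)
      exact ⟨v, hE, rfl⟩
  rw [← Set.ncard_image_of_injective _ supp_injective, h1, Set.ncard_powerset D
    ((Set.finite_range _).subset hD)]

/-! ### Transfer along the isomorphism -/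

section Transfer

variable {B' W' : Type*} [Group W'] {M' : CoxeterMatrix B'} {cs' : CoxeterSystem M' W'}

/-- Conjugation is invisible in the abelianization, so the coordinate subspaces of matching
parabolic subgroups correspond to each other. -/
lemma supp_subset_iff (φ : W ≃* W') {T : Set B} {T' : Set B'} {w' : W'}
    (h : (cs.parabolic T).map φ.toMonoidHom = conjSubgroup w' (cs'.parabolic T'))
    (v : Abelianization W) :
    supp cs v ⊆ ab cs '' T ↔ supp cs' (φ.abelianizationCongr v) ⊆ ab cs' '' T' := by
  rw [← mem_map_parabolic, ← mem_map_parabolic]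
  have hc : (Abelianization.of (G := W')).comp (MulAut.conj w').toMonoidHom
      = Abelianization.of := by
    ext x
    change Abelianization.of (w' * x * w'⁻¹) = Abelianization.of x
    rw [map_mul, map_mul, mul_comm, ← mul_assoc, ← map_mul, inv_mul_cancel, map_one, one_mul]
  have h2 : ((cs.parabolic T).map φ.toMonoidHom).map Abelianization.of
      = (cs'.parabolic T').map Abelianization.of := by
    rw [h, conjSubgroup, Subgroup.map_map, hc]
  rw [← h2]
  constructor
  · rintro ⟨x, hx, rfl⟩
    exact ⟨φ x, ⟨x, hx, rfl⟩, rfl⟩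
  · rintro ⟨_, ⟨x, hx, rfl⟩, hxv⟩
    exact ⟨x, hx, φ.abelianizationCongr.injective hxv⟩

lemma ncard_iInter_image_ab [Finite B] [Finite B'] {ι : Type*} [Nonempty ι] (φ : W ≃* W')
    (T : ι → Set B) (T' : ι → Set B')
    (h : ∀ a, ∃ w', (cs.parabolic (T a)).map φ.toMonoidHom
      = conjSubgroup w' (cs'.parabolic (T' a))) :
    (⋂ a, ab cs '' T a).ncard = (⋂ a, ab cs' '' T' a).ncard := by
  have a₀ : ι := Classical.arbitrary ι
  have h1 : (⋂ a, ab cs '' T a) ⊆ Set.range (ab cs) :=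
    (Set.iInter_subset _ a₀).trans (Set.image_subset_range _ _)
  have h2 : (⋂ a, ab cs' '' T' a) ⊆ Set.range (ab cs') :=
    (Set.iInter_subset _ a₀).trans (Set.image_subset_range _ _)
  have h3 : φ.abelianizationCongr '' {v | supp cs v ⊆ ⋂ a, ab cs '' T a}
      = {v | supp cs' v ⊆ ⋂ a, ab cs' '' T' a} := by
    have key (v) : supp cs v ⊆ (⋂ a, ab cs '' T a) ↔
        supp cs' (φ.abelianizationCongr v) ⊆ ⋂ a, ab cs' '' T' a := by
      rw [Set.subset_iInter_iff, Set.subset_iInter_iff]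
      exact forall_congr' fun a => supp_subset_iff φ (h a).choose_spec v
    ext v
    constructor
    · rintro ⟨v, hv, rfl⟩
      exact (key v).1 hv
    · intro hv
      refine ⟨φ.abelianizationCongr.symm v, (key _).2 ?_, MulEquiv.apply_symm_apply _ _⟩
      rw [MulEquiv.apply_symm_apply]
      exact hv
  have h4 := congrArg Set.ncard h3
  rw [Set.ncard_image_of_injective _ φ.abelianizationCongr.injective, ncard_supp_subset h1,
    ncard_supp_subset h2] at h4
  exact Nat.pow_right_injective le_rfl h4

/-- Intersections commute with images, and keep their size, when the map is injective on the union
of the sets. -/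
lemma ncard_iInter_image {ι A : Type*} [Nonempty ι] (q : B → A) (T : ι → Set B)
    (h : ∀ a b, ∀ i ∈ T a, ∀ j ∈ T b, q i = q j → i = j) :
    (⋂ a, q '' T a).ncard = (⋂ a, T a).ncard := by
  have a₀ : ι := Classical.arbitrary ι
  have h1 : q '' (⋂ a, T a) = ⋂ a, q '' T a := by
    refine (Set.image_iInter_subset _ _).antisymm fun x hx => ?_
    rw [Set.mem_iInter] at hx
    obtain ⟨i, hi, rfl⟩ := hx a₀
    refine ⟨i, Set.mem_iInter.2 fun a => ?_, rfl⟩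
    obtain ⟨j, hj, hji⟩ := hx a
    rwa [h a₀ a i hi j hj hji.symm]
  rw [← h1, Set.InjOn.ncard_image]
  intro i hi j hj hij
  exact h a₀ a₀ i (Set.mem_iInter.1 hi a₀) j (Set.mem_iInter.1 hj a₀) hij

/-- Two standard parabolic subgroups conjugate to the image of the same subgroup of `W` have the
same index set, provided they are maximal spherical. -/
lemma eq_of_conj_same {P : Subgroup W} (φ : W ≃* W') {T₁ T₂ : Set B'} {w₁ w₂ : W'}
    (hT₁ : cs'.IsMaxSpherical T₁) (hT₂ : cs'.IsMaxSpherical T₂)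
    (h₁ : P.map φ.toMonoidHom = conjSubgroup w₁ (cs'.parabolic T₁))
    (h₂ : P.map φ.toMonoidHom = conjSubgroup w₂ (cs'.parabolic T₂)) : T₁ = T₂ := by
  refine eq_of_conj (cs := cs') hT₂ hT₁.1 (w₂⁻¹ * w₁) fun u hu => ?_
  have h : w₂ * u * w₂⁻¹ ∈ conjSubgroup w₁ (cs'.parabolic T₁) := by
    rw [← h₁, h₂]
    exact ⟨u, hu, rfl⟩
  obtain ⟨x, hx, hxu⟩ := h
  have hxu' : w₁ * x * w₁⁻¹ = w₂ * u * w₂⁻¹ := hxu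
  have : (w₂⁻¹ * w₁)⁻¹ * u * (w₂⁻¹ * w₁) = x := by
    have : x = w₁⁻¹ * (w₂ * u * w₂⁻¹) * w₁ := by rw [← hxu']; group
    rw [this]; group
  rwa [this]

end Transfer

/-! ### Elementary abelian parabolic subgroups -/

lemma odd_orderOf {i j : B} (h : Odd (M i j)) : Odd (orderOf (cs.simple i * cs.simple j)) :=
  h.of_dvd_nat (orderOf_dvd_of_pow_eq_one (cs.simple_mul_simple_pow i j))

lemma ab_eq_of_odd_orderOf {i j : B} (h : Odd (orderOf (cs.simple i * cs.simple j))) :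
    ab cs i = ab cs j :=
  ab_eq_of_odd h (pow_orderOf_eq_one _)

lemma card_of_equiv [Finite B] {T : Set B} {P : Subgroup W}
    (h : Nonempty (P ≃* Multiplicative (T → ZMod 2))) : Nat.card P = 2 ^ T.ncard := by
  obtain ⟨e⟩ := h
  rw [Nat.card_congr e.toEquiv, Nat.card_congr Multiplicative.toAdd, Nat.card_fun, Nat.card_zmod,
    Nat.card_coe_set_eq]

lemma comm_of_equiv {T : Set B} {P : Subgroup W}
    (h : Nonempty (P ≃* Multiplicative (T → ZMod 2))) {x y : W} (hx : x ∈ P) (hy : y ∈ P) :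
    x * y = y * x := by
  obtain ⟨e⟩ := h
  have : (⟨x, hx⟩ * ⟨y, hy⟩ : P) = ⟨y, hy⟩ * ⟨x, hx⟩ :=
    e.injective (by rw [map_mul, map_mul, mul_comm])
  exact congrArg Subtype.val this

lemma eq_of_comm_of_odd {i j : B} (hc : cs.simple i * cs.simple j = cs.simple j * cs.simple i)
    (h : Odd (orderOf (cs.simple i * cs.simple j))) : cs.simple i = cs.simple j := by
  have h2 : (cs.simple i * cs.simple j) ^ 2 = 1 := by
    rw [pow_two]
    nth_rewrite 2 [hc]
    rw [← mul_assoc, mul_assoc (cs.simple i), cs.simple_mul_simple_self, mul_one,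
      cs.simple_mul_simple_self]
  have h3 : orderOf (cs.simple i * cs.simple j) = 1 := by
    rcases (Nat.dvd_prime Nat.prime_two).1 (orderOf_dvd_of_pow_eq_one h2) with h3 | h3
    · exact h3
    · rw [h3] at h
      exact absurd h (by decide)
  rw [orderOf_eq_one_iff] at h3
  rw [eq_inv_of_mul_eq_one_left h3, cs.inv_simple]

/-- The dihedral subgroup on an odd edge is not elementary abelian of rank two. -/
lemma not_equiv_pair [Finite B] {p r : B} (hpr : p ≠ r)
    (h : Odd (orderOf (cs.simple p * cs.simple r)))
    (hz : Nonempty (cs.parabolic {p, r} ≃* Multiplicative (({p, r} : Set B) → ZMod 2))) :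
    False := by
  have hp : cs.simple p ∈ cs.parabolic {p, r} := Subgroup.subset_closure ⟨p, by simp, rfl⟩
  have hr : cs.simple r ∈ cs.parabolic {p, r} := Subgroup.subset_closure ⟨r, by simp, rfl⟩
  have he := eq_of_comm_of_odd (comm_of_equiv hz hp hr) h
  have hcard := card_of_equiv hz
  have hz : cs.parabolic {p, r} = Subgroup.zpowers (cs.simple p) := by
    rw [CoxeterSystem.parabolic, Set.image_pair, ← he, Set.pair_eq_singleton,
      Subgroup.zpowers_eq_closure]
  rw [hz, Nat.card_zpowers, Set.ncard_pair hpr] at hcard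
  have := Nat.le_of_dvd (by norm_num)
    (orderOf_dvd_of_pow_eq_one (cs.simple_sq p))
  omega

/-! ### Odd edges -/

/-- If no vertex lies on two odd edges, distinct generators with the same class in the
abelianization span an odd edge. -/
lemma odd_of_ab_eq
    (h2 : ¬ ∃ i j k : B, i ≠ j ∧ j ≠ k ∧ i ≠ k ∧
      Odd (orderOf (cs.simple i * cs.simple j)) ∧ Odd (orderOf (cs.simple j * cs.simple k)))
    {i j : B} (hij : i ≠ j) (h : ab cs i = ab cs j) :
    Odd (orderOf (cs.simple i * cs.simple j)) := by
  obtain ⟨χ, hχ⟩ := exists_char cs {k | k = i ∨ Odd (orderOf (cs.simple i * cs.simple k))} (by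
    rintro a b hab (rfl | ha)
    · exact Or.inr (odd_orderOf hab)
    · by_cases hb : b = i
      · exact Or.inl hb
      · right
        by_cases hai : a = i
        · rw [← hai]
          exact odd_orderOf hab
        · by_cases hba : b = a
          · rwa [hba]
          · exact absurd ⟨i, a, b, Ne.symm hai, Ne.symm hba, Ne.symm hb, ha, odd_orderOf hab⟩ h2)
  have h3 : χ (ab cs j) ≠ 1 := h ▸ (hχ i).2 (Or.inl rfl)
  rcases (hχ j).1 h3 with h4 | h4
  · exact absurd h4.symm hij
  · exact h4

lemma exists_odd_of_ab_eq {i j : B} (hij : i ≠ j) (h : ab cs i = ab cs j) :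
    ∃ l, i ≠ l ∧ Odd (M i l) := by
  by_contra hno
  push Not at hno
  obtain ⟨χ, hχ⟩ := exists_char cs {i} (by
    rintro a b hab rfl
    by_contra hb
    exact hno b (fun h => hb h.symm) hab)
  exact hij ((hχ j).1 (h ▸ (hχ i).2 rfl)).symm

/-- If at most two maximal spherical subsets meet the maximal spherical pair `{p, r}`, then at most
one besides the pair itself does. -/
lemma eq_of_meet [Finite B]
    {p r : B} (h1 : cs.IsMaxSpherical {p, r})
    (h3 : {T : Set B | cs.IsMaxSpherical T ∧ (T ∩ {p, r}).Nonempty}.ncard ≤ 2)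
    {T₁ T₂ : Set B} (hT₁ : cs.IsMaxSpherical T₁) (hT₂ : cs.IsMaxSpherical T₂)
    (hn₁ : T₁ ≠ {p, r}) (hn₂ : T₂ ≠ {p, r})
    (hm₁ : (T₁ ∩ {p, r}).Nonempty) (hm₂ : (T₂ ∩ {p, r}).Nonempty) : T₁ = T₂ := by
  by_contra hne
  have hsub : ({T₁, T₂, {p, r}} : Set (Set B)) ⊆
      {T : Set B | cs.IsMaxSpherical T ∧ (T ∩ {p, r}).Nonempty} := by
    rintro T (rfl | rfl | rfl)
    · exact ⟨hT₁, hm₁⟩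
    · exact ⟨hT₂, hm₂⟩
    · exact ⟨h1, p, by simp, by simp⟩
  have := Set.ncard_le_ncard hsub (Set.toFinite _)
  rw [Set.ncard_eq_three.2 ⟨T₁, T₂, {p, r}, hne, hn₁, hn₂, rfl⟩] at this
  omega

/-- Two simple reflections whose product has finite order generate a finite subgroup. -/
lemma finite_parabolic_pair {i l : B} (h : M i l ≠ 0) : Finite (cs.parabolic {i, l}) := by
  set a := cs.simple i
  set b := cs.simple l
  have ha : a * a = 1 := cs.simple_mul_simple_self i
  have hfo : IsOfFinOrder (a * b) :=
    isOfFinOrder_iff_pow_eq_one.2 ⟨M i l, Nat.pos_of_ne_zero h, cs.simple_mul_simple_pow i l⟩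
  have hz : (Subgroup.zpowers (a * b) : Set W).Finite := finite_zpowers.2 hfo
  have hainv : (a * b)⁻¹ = b * a := by rw [mul_inv_rev, cs.inv_simple, cs.inv_simple]
  have hmem : a * b ∈ Subgroup.zpowers (a * b) := Subgroup.mem_zpowers _
  -- The dihedral group is the union of the rotations and the rotations times `a`.
  set F : Set W := (Subgroup.zpowers (a * b) : Set W) ∪ (· * a) '' Subgroup.zpowers (a * b)
  have hF : F.Finite := hz.union (hz.image _)
  have step : ∀ x ∈ F, ∀ y ∈ cs.simple '' {i, l}, x * y ∈ F := by
    rintro x hx _ ⟨c, rfl | rfl, rfl⟩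
    · rcases hx with hx | ⟨z, hz, rfl⟩
      · exact Or.inr ⟨x, hx, rfl⟩
      · left
        change z * a * a ∈ _
        rwa [mul_assoc, ha, mul_one]
    · rcases hx with hx | ⟨z, hz, rfl⟩
      · refine Or.inr ⟨x * (a * b)⁻¹, mul_mem hx (inv_mem hmem), ?_⟩
        change x * (a * b)⁻¹ * a = x * b
        rw [hainv, mul_assoc, mul_assoc, ha, mul_one]
      · left
        change z * a * b ∈ _
        rw [mul_assoc]
        exact mul_mem hz hmem
  refine (hF.subset fun x hx => ?_).to_subtype
  induction hx using Subgroup.closure_induction_right with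
  | one => exact Or.inl (one_mem _)
  | mul_right x _ y hy ih => exact step x ih y hy
  | mul_inv_cancel x _ y hy ih =>
    obtain ⟨c, hc, rfl⟩ := hy
    rw [cs.inv_simple]
    exact step x ih _ ⟨c, hc, rfl⟩

/-- A finite noncommutative subgroup is, up to conjugation, contained in the dihedral subgroup on
an odd edge. -/
lemma exists_odd_pair
    (h0 : ∀ i j : B, orderOf (cs.simple i * cs.simple j) ≠ 0 →
      Even (orderOf (cs.simple i * cs.simple j)) → orderOf (cs.simple i * cs.simple j) = 2)
    (h1 : ∀ i j : B, i ≠ j → Odd (orderOf (cs.simple i * cs.simple j)) →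
      cs.IsMaxSpherical {i, j})
    [Finite B] (H : Subgroup W) [Finite H] {x y : W} (hx : x ∈ H) (hy : y ∈ H)
    (hxy : x * y ≠ y * x) :
    ∃ p r g, p ≠ r ∧ Odd (orderOf (cs.simple p * cs.simple r)) ∧
      ∀ h ∈ H, g⁻¹ * h * g ∈ cs.parabolic {p, r} := by
  obtain ⟨g, U, hU, hH⟩ := exists_spherical_of_finite (cs := cs) H
  have hnc : ¬ ∀ p ∈ U, ∀ r ∈ U, cs.simple p * cs.simple r = cs.simple r * cs.simple p := by
    intro hc
    have hcomm := Subgroup.isMulCommutative_closure (k := cs.simple '' U) (by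
      rintro _ ⟨p, hp, rfl⟩ _ ⟨r, hr, rfl⟩
      exact hc p hp r hr)
    have h3 := congrArg Subtype.val (hcomm.is_comm.comm
      (⟨_, hH x hx⟩ : cs.parabolic U) ⟨_, hH y hy⟩)
    apply hxy
    have h4 : g⁻¹ * x * g * (g⁻¹ * y * g) = g⁻¹ * y * g * (g⁻¹ * x * g) := h3
    have h5 : g⁻¹ * (x * y) * g = g⁻¹ * (y * x) * g := by
      calc _ = g⁻¹ * x * g * (g⁻¹ * y * g) := by group
        _ = g⁻¹ * y * g * (g⁻¹ * x * g) := h4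
        _ = _ := by group
    exact mul_left_cancel (mul_right_cancel h5)
  push Not at hnc
  obtain ⟨p, hp, r, hr, hpr⟩ := hnc
  have hne : p ≠ r := by
    rintro rfl
    exact hpr rfl
  have hpU : cs.simple p ∈ cs.parabolic U := Subgroup.subset_closure ⟨p, hp, rfl⟩
  have hrU : cs.simple r ∈ cs.parabolic U := Subgroup.subset_closure ⟨r, hr, rfl⟩
  have hord : orderOf (cs.simple p * cs.simple r) ≠ 0 := by
    have : Finite (cs.parabolic U) := hU
    have h := orderOf_pos (⟨_, mul_mem hpU hrU⟩ : cs.parabolic U)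
    rw [Subgroup.orderOf_mk] at h
    exact h.ne'
  have hodd : Odd (orderOf (cs.simple p * cs.simple r)) := by
    rw [← Nat.not_even_iff_odd]
    intro hev
    have h2 := pow_orderOf_eq_one (cs.simple p * cs.simple r)
    rw [h0 p r hord hev, pow_two] at h2
    apply hpr
    rw [eq_inv_of_mul_eq_one_left h2, mul_inv_rev, cs.inv_simple, cs.inv_simple]
  refine ⟨p, r, g, hne, hodd, ?_⟩
  rwa [← (h1 p r hne hodd).2 U hU (by rintro z (rfl | rfl) <;> assumption)]

end CoxGeom

open CoxGeom

/-- Let `(W,S)` satisfy conditions (0)–(3) and let `φ : W → W'` be an isomorphism onto the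
Coxeter group of a system `(W',S')`. If `T_1, …, T_k` are maximal spherical subsets of `S`
and `T'_1, …, T'_k` are maximal spherical subsets of `S'` with `φ(W_{T_i})` conjugate to
`W'_{T'_i}` and `W_{T_i} ≅ (ℤ/2ℤ)^{|T_i|}` for each `i`, then
`|T_1 ∩ ⋯ ∩ T_k| = |T'_1 ∩ ⋯ ∩ T'_k|`. -/
theorem ncard_iInter_eq {B B' : Type*} [Fintype B] [Fintype B']
    {W W' : Type*} [Group W] [Group W']
    {M : CoxeterMatrix B} (cs : CoxeterSystem M W)
    {M' : CoxeterMatrix B'} (cs' : CoxeterSystem M' W')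
    (h0 : ∀ i j : B, orderOf (cs.simple i * cs.simple j) ≠ 0 →
      Even (orderOf (cs.simple i * cs.simple j)) → orderOf (cs.simple i * cs.simple j) = 2)
    (h1 : ∀ i j : B, i ≠ j → Odd (orderOf (cs.simple i * cs.simple j)) →
      cs.IsMaxSpherical {i, j})
    (h2 : ¬ ∃ i j k : B, i ≠ j ∧ j ≠ k ∧ i ≠ k ∧
      Odd (orderOf (cs.simple i * cs.simple j)) ∧ Odd (orderOf (cs.simple j * cs.simple k)))
    (h3 : ∀ i j : B, i ≠ j → Odd (orderOf (cs.simple i * cs.simple j)) →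
      {T : Set B | cs.IsMaxSpherical T ∧ (T ∩ {i, j}).Nonempty}.ncard ≤ 2)
    (φ : W ≃* W')
    (k : ℕ) (hk : 0 < k)
    (T : Fin k → Set B) (T' : Fin k → Set B')
    (hTmax : ∀ i, cs.IsMaxSpherical (T i))
    (hTmax' : ∀ i, cs'.IsMaxSpherical (T' i))
    (hconj : ∀ i, ∃ w' : W', Subgroup.map φ.toMonoidHom (cs.parabolic (T i))
      = conjSubgroup w' (cs'.parabolic (T' i)))
    (hz2 : ∀ i, Nonempty ((cs.parabolic (T i)) ≃* Multiplicative ((T i) → ZMod 2))) :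
    (⋂ i, T i).ncard = (⋂ i, T' i).ncard := by
  have hne : Nonempty (Fin k) := ⟨⟨0, hk⟩⟩
  -- No `T a` is an odd edge, since the dihedral group on it is not elementary abelian.
  have hTne : ∀ a p r, p ≠ r → Odd (orderOf (cs.simple p * cs.simple r)) → T a ≠ {p, r} := by
    intro a p r hpr hodd hT
    have := hz2 a
    rw [hT] at this
    exact not_equiv_pair hpr hodd this
  have hmeet : ∀ a b p r, p ≠ r → Odd (orderOf (cs.simple p * cs.simple r)) →
      (T a ∩ {p, r}).Nonempty → (T b ∩ {p, r}).Nonempty → T a = T b :=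
    fun a b p r hpr hodd ha hb => eq_of_meet (h1 p r hpr hodd) (h3 p r hpr hodd) (hTmax a)
      (hTmax b) (hTne a p r hpr hodd) (hTne b p r hpr hodd) ha hb
  have hinj : ∀ a b, ∀ i ∈ T a, ∀ j ∈ T b, ab cs i = ab cs j → i = j := by
    intro a b i hi j hj hij
    by_contra hne
    have hodd := odd_of_ab_eq h2 hne hij
    have hab := hmeet a b i j hne hodd ⟨i, hi, by simp⟩ ⟨j, hj, by simp⟩
    refine hTne a i j hne hodd ((h1 i j hne hodd).2 _ (hTmax a).1 ?_)
    rintro x (rfl | rfl)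
    · exact hi
    · rwa [hab]
  have hinj1' : ∀ a, Set.InjOn (ab cs') (T' a) := by
    intro a
    obtain ⟨w', hw⟩ := hconj a
    -- The parabolic subgroup of `T' a` is commutative of order `2 ^ |T a|`.
    let ψ : W ≃* W' := φ.trans (MulAut.conj w'⁻¹)
    have hP : (cs.parabolic (T a)).map ψ.toMonoidHom = cs'.parabolic (T' a) := by
      have : ψ.toMonoidHom = (MulAut.conj w'⁻¹).toMonoidHom.comp φ.toMonoidHom := rfl
      rw [this, ← Subgroup.map_map, hw, conjSubgroup, Subgroup.map_map]
      convert Subgroup.map_id _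
      ext x
      change w'⁻¹ * (w' * x * w'⁻¹) * w'⁻¹⁻¹ = x
      group
    have hz' : Nonempty (cs'.parabolic (T' a) ≃* Multiplicative ((T a) → ZMod 2)) := by
      rw [← hP]
      exact ⟨((cs.parabolic (T a)).equivMapOfInjective ψ.toMonoidHom ψ.injective).symm.trans
        (hz2 a).some⟩
    have hle := two_pow_le_card (hTmax' a).1 fun i hi j hj => comm_of_equiv hz'
      (Subgroup.subset_closure ⟨i, hi, rfl⟩) (Subgroup.subset_closure ⟨j, hj, rfl⟩)
    rw [card_of_equiv hz', Nat.pow_le_pow_iff_right (by norm_num)] at hle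
    have hcard := ncard_iInter_image_ab (cs := cs) (cs' := cs') φ (fun _ : Unit => T a)
      (fun _ => T' a) fun _ => ⟨w', hw⟩
    rw [Set.iInter_const, Set.iInter_const, Set.InjOn.ncard_image
      fun i hi j hj hij => hinj a a i hi j hj hij] at hcard
    refine Set.injOn_of_ncard_image_eq ?_ (Set.toFinite _)
    exact le_antisymm (Set.ncard_image_le (Set.toFinite _)) (hcard ▸ hle)
  have hinj' : ∀ a b, ∀ i ∈ T' a, ∀ j ∈ T' b, ab cs' i = ab cs' j → i = j := by
    intro a b i hi j hj hij
    by_contra hne'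
    obtain ⟨l, hil, hodd⟩ := exists_odd_of_ab_eq hne' hij
    have hH : Finite (cs'.parabolic {i, l}) :=
      finite_parabolic_pair fun h => by rw [h] at hodd; exact absurd hodd (by decide)
    have hiH : cs'.simple i ∈ cs'.parabolic {i, l} := Subgroup.subset_closure ⟨i, by simp, rfl⟩
    have hlH : cs'.simple l ∈ cs'.parabolic {i, l} := Subgroup.subset_closure ⟨l, by simp, rfl⟩
    -- Pull the dihedral subgroup back to `W`, where it lies over an odd edge `{p, r}`.
    have hH2 : Finite ((cs'.parabolic {i, l}).map φ.symm.toMonoidHom) :=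
      Set.Finite.image _ (Set.toFinite (cs'.parabolic {i, l} : Set W'))
    obtain ⟨p, r, g, hpr, hpro, hsub⟩ := exists_odd_pair h0 h1
      ((cs'.parabolic {i, l}).map φ.symm.toMonoidHom)
      (x := φ.symm (cs'.simple i)) (y := φ.symm (cs'.simple l)) ⟨_, hiH, rfl⟩ ⟨_, hlH, rfl⟩ (by
        rw [← map_mul, ← map_mul]
        exact fun h => not_comm_of_odd hil hodd (φ.symm.injective h))
    have hpq : ab cs p = ab cs r := ab_eq_of_odd_orderOf hpro
    have hΦ : φ.abelianizationCongr (ab cs p) = ab cs' i := by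
      set v : Abelianization W := Abelianization.of (φ.symm (cs'.simple i)) with hv
      have hφv : φ.abelianizationCongr v = ab cs' i := by
        rw [hv, abelianizationCongr_of, MulEquiv.apply_symm_apply]
        rfl
      have hvm : v ∈ (cs.parabolic {p, r}).map Abelianization.of := by
        refine ⟨_, hsub _ ⟨_, hiH, rfl⟩, ?_⟩
        change Abelianization.of (g⁻¹ * φ.symm (cs'.simple i) * g) = v
        rw [map_mul, map_mul, mul_comm, ← mul_assoc, ← map_mul, mul_inv_cancel, map_one, one_mul]
      rw [mem_map_parabolic, Set.image_pair, ← hpq, Set.pair_eq_singleton,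
        Set.subset_singleton_iff_eq] at hvm
      rcases hvm with hvm | hvm
      · exfalso
        have h1v : supp cs (1 : Abelianization W) = ∅ :=
          Set.eq_empty_of_forall_notMem fun c hc => hc (map_one _)
        rw [← h1v] at hvm
        rw [supp_injective hvm, map_one] at hφv
        exact ab_ne_one i hφv.symm
      · rw [← supp_ab p] at hvm
        rw [← supp_injective hvm, hφv]
    have key : ∀ c, ∀ m ∈ T' c, ab cs' i = ab cs' m → (T c ∩ {p, r}).Nonempty := by
      intro c m hm him
      obtain ⟨w', hw⟩ := hconj c
      have h5 := (supp_subset_iff (cs := cs) (cs' := cs') φ hw (ab cs p)).2 (by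
        rw [hΦ, supp_ab, him]
        rintro _ rfl
        exact ⟨m, hm, rfl⟩)
      rw [supp_ab] at h5
      obtain ⟨n, hn, hnp⟩ := h5 rfl
      refine ⟨n, hn, ?_⟩
      by_contra hnot
      have hnp' : n ≠ p := fun h => hnot (Or.inl h)
      have hnr : n ≠ r := fun h => hnot (Or.inr h)
      exact h2 ⟨n, p, r, hnp', hpr, hnr, odd_of_ab_eq h2 hnp' hnp, hpro⟩
    have hab : T a = T b := hmeet a b p r hpr hpro (key a i hi rfl) (key b j hj hij)
    obtain ⟨w₁, hw₁⟩ := hconj a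
    obtain ⟨w₂, hw₂⟩ := hconj b
    rw [← hab] at hw₂
    have hab' := eq_of_conj_same φ (hTmax' a) (hTmax' b) hw₁ hw₂
    rw [← hab'] at hj
    exact hne' (hinj1' a hi hj hij)
  rw [← ncard_iInter_image (ab cs) T hinj, ← ncard_iInter_image (ab cs') T' hinj']
  exact ncard_iInter_image_ab φ T T' hconj
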